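/- Let T and S be bounded linear operators on H each admitting an A-adjoint. Then ω_A(TS) ≤ (1/2) · ω_A(ST) + (1/4) · ‖S S^{♯_A} + T^{♯_A} T‖_A. -/

import Mathlib

noncomputable section

open ContinuousLinearMap

variable {H : Type*} [NormedAddCommGroup H] [InnerProductSpace ℂ H] [CompleteSpace H]

/-- The semi-inner product induced by the positive operator `A`: `⟨x, y⟩_A := ⟨A x, y⟩`. -/
def innA (A : H →L[ℂ] H) (x y : H) : ℂ := inner ℂ (A x) y

/-- The seminorm induced by `A`: `‖x‖_A := ⟨x, x⟩_A ^ (1/2)`. -/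
def vnormA (A : H →L[ℂ] H) (x : H) : ℝ := Real.sqrt (innA A x x).re

/-- The `A`-operator seminorm: `‖T‖_A := sup {‖T x‖_A : ‖x‖_A = 1}`. -/
def opNormA (A T : H →L[ℂ] H) : ℝ :=
  sSup {c : ℝ | ∃ x : H, vnormA A x = 1 ∧ c = vnormA A (T x)}

/-- The `A`-numerical radius: `ω_A(T) := sup {|⟨T x, x⟩_A| : ‖x‖_A = 1}`. -/
def wA (A T : H →L[ℂ] H) : ℝ :=
  sSup {c : ℝ | ∃ x : H, vnormA A x = 1 ∧ c = ‖innA A (T x) x‖}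

/-- `T` admits an `A`-adjoint: there is a bounded operator `X` with `A X = T* A`. -/
def HasAAdjoint (A T : H →L[ℂ] H) : Prop :=
  ∃ X : H →L[ℂ] H, A ∘L X = adjoint T ∘L A

/-- `X` is the reduced `A`-adjoint `T^{♯_A}` of `T`: it solves `A X = T* A` and its range
is contained in the closure of the range of `A`. -/
def IsReducedAAdjoint (A T X : H →L[ℂ] H) : Prop :=
  (A ∘L X = adjoint T ∘L A) ∧ ∀ y : H, X y ∈ closure (Set.range A)

/-!
Operators with an `A`-adjoint are bounded for the seminorm `‖·‖_A`: for an `A`-symmetric `R` the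
sequence `‖Rⁿ x‖_A` is log-convex and grows at most like `‖R‖ⁿ`, so `‖R x‖_A ≤ ‖R‖ ‖x‖_A`. They
therefore extend to the Hilbert space completion of the semi-inner product space of `A`, and it
suffices to treat ordinary adjoints on a Hilbert space.

There, rotate `T` by a unimodular scalar so that only the real part of `⟨TS x, x⟩` matters.
Twice this real part is the quadratic form of the self-adjoint operator `TS + (TS)* = XY`, where
`X` is the row `(T, S*)` and `Y` the column `(S, T*)`. The nonzero spectrum of `XY` is that of `YX`,
which is the operator matrix `[[ST, SS*], [T*T, (ST)*]]`, and the numerical range of this matrix has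
real part at most `ω(ST) + ‖SS* + T*T‖ / 2`.
-/

open UniformSpace
open scoped InnerProductSpace

section NumericalRadius

variable {𝕜 E : Type*} [RCLike 𝕜] [SeminormedAddCommGroup E] [InnerProductSpace 𝕜 E]

/-- The numerical radius of a bounded operator on a semi-inner product space. It is `0` when the
space has no unit vector. -/
def numericalRadius (T : E →L[𝕜] E) : ℝ :=
  sSup {c : ℝ | ∃ x : E, ‖x‖ = 1 ∧ c = ‖⟪T x, x⟫_𝕜‖}

theorem numericalRadius_nonneg (T : E →L[𝕜] E) : 0 ≤ numericalRadius T :=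
  Real.sSup_nonneg (by rintro _ ⟨x, -, rfl⟩; exact norm_nonneg _)

theorem norm_inner_apply_self_le_norm_mul_sq (T : E →L[𝕜] E) (x : E) :
    ‖⟪T x, x⟫_𝕜‖ ≤ ‖T‖ * ‖x‖ ^ 2 :=
  calc ‖⟪T x, x⟫_𝕜‖ ≤ ‖T x‖ * ‖x‖ := norm_inner_le_norm _ _
    _ ≤ ‖T‖ * ‖x‖ * ‖x‖ := by gcongr; exact T.le_opNorm x
    _ = ‖T‖ * ‖x‖ ^ 2 := by ring

theorem norm_inner_apply_self_le_numericalRadius_mul_sq (T : E →L[𝕜] E) (x : E) :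
    ‖⟪T x, x⟫_𝕜‖ ≤ numericalRadius T * ‖x‖ ^ 2 := by
  rcases (norm_nonneg x).eq_or_lt with hx | hx
  · simpa [← hx] using norm_inner_apply_self_le_norm_mul_sq T x
  have hbdd : BddAbove {c : ℝ | ∃ x : E, ‖x‖ = 1 ∧ c = ‖⟪T x, x⟫_𝕜‖} := by
    refine ⟨‖T‖, ?_⟩
    rintro _ ⟨y, hy, rfl⟩
    simpa [hy] using norm_inner_apply_self_le_norm_mul_sq T y
  have hunit : ‖((‖x‖⁻¹ : ℝ) : 𝕜) • x‖ = 1 := by simp [norm_smul, hx.ne']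
  have hle := le_csSup hbdd ⟨_, hunit, rfl⟩
  simp only [map_smul, inner_smul_left, inner_smul_right, norm_mul, RCLike.norm_conj,
    RCLike.norm_ofReal, abs_inv, abs_norm] at hle
  rwa [← mul_assoc, ← sq, inv_pow, inv_mul_le_iff₀ (by positivity), mul_comm] at hle

theorem numericalRadius_le {T : E →L[𝕜] E} {C : ℝ} (hC : 0 ≤ C)
    (h : ∀ x, ‖⟪T x, x⟫_𝕜‖ ≤ C * ‖x‖ ^ 2) : numericalRadius T ≤ C :=
  Real.sSup_le (by rintro _ ⟨x, hx, rfl⟩; simpa [hx] using h x) hC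

theorem numericalRadius_smul_of_norm_eq_one {c : 𝕜} (hc : ‖c‖ = 1) (T : E →L[𝕜] E) :
    numericalRadius (c • T) = numericalRadius T := by
  simp [numericalRadius, inner_smul_left, hc]

theorem numericalRadius_completion (T : E →L[𝕜] E) :
    numericalRadius T.completion = numericalRadius T := by
  refine le_antisymm (numericalRadius_le (numericalRadius_nonneg T) fun x ↦ ?_)
    (numericalRadius_le (numericalRadius_nonneg _) fun x ↦ ?_)
  · induction x using Completion.induction_on with
    | hp => exact isClosed_le (by fun_prop) (by fun_prop)
    | ih x => simpa using norm_inner_apply_self_le_numericalRadius_mul_sq T x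
  · simpa using norm_inner_apply_self_le_numericalRadius_mul_sq T.completion (x : Completion E)

end NumericalRadius

section Completion

theorem norm_completion {𝕜 E F : Type*} [NontriviallyNormedField 𝕜] [SeminormedAddCommGroup E]
    [NormedSpace 𝕜 E] [SeminormedAddCommGroup F] [NormedSpace 𝕜 F] (T : E →L[𝕜] F) :
    ‖T.completion‖ = ‖T‖ := by
  refine le_antisymm (opNorm_le_bound _ (norm_nonneg T) fun x ↦ ?_)
    (opNorm_le_bound _ (norm_nonneg _) fun x ↦ ?_)
  · induction x using Completion.induction_on with
    | hp => exact isClosed_le (by fun_prop) (by fun_prop)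
    | ih x => simpa using T.le_opNorm x
  · simpa using T.completion.le_opNorm (x : Completion E)

theorem completion_eq_adjoint {𝕜 E : Type*} [RCLike 𝕜] [SeminormedAddCommGroup E]
    [InnerProductSpace 𝕜 E] {T T' : E →L[𝕜] E} (h : ∀ x y, ⟪T' x, y⟫_𝕜 = ⟪x, T y⟫_𝕜) :
    T'.completion = adjoint T.completion := by
  refine (eq_adjoint_iff _ _).2 fun x y ↦ ?_
  induction x, y using Completion.induction_on₂ with
  | hp => exact isClosed_eq (by fun_prop) (by fun_prop)
  | ih x y => simpa using h x y

theorem completion_comp {𝕜 E F G : Type*} [NontriviallyNormedField 𝕜] [SeminormedAddCommGroup E]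
    [NormedSpace 𝕜 E] [SeminormedAddCommGroup F] [NormedSpace 𝕜 F] [SeminormedAddCommGroup G]
    [NormedSpace 𝕜 G] (S : F →L[𝕜] G) (T : E →L[𝕜] F) :
    (S ∘L T).completion = S.completion ∘L T.completion := by
  ext x
  induction x using Completion.induction_on with
  | hp => exact isClosed_eq (by fun_prop) (by fun_prop)
  | ih x => simp

theorem completion_add {𝕜 E F : Type*} [NontriviallyNormedField 𝕜] [SeminormedAddCommGroup E]
    [NormedSpace 𝕜 E] [SeminormedAddCommGroup F] [NormedSpace 𝕜 F] (S T : E →L[𝕜] F) :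
    (S + T).completion = S.completion + T.completion := by
  ext x
  induction x using Completion.induction_on with
  | hp => exact isClosed_eq (by fun_prop) (by fun_prop)
  | ih x => simp [Completion.coe_add]

end Completion

section Spectrum

variable {𝕜 E F : Type*} [RCLike 𝕜]

theorem mem_spectrum_comp_swap [NormedAddCommGroup E] [NormedSpace 𝕜 E] [NormedAddCommGroup F]
    [NormedSpace 𝕜 F] {X : F →L[𝕜] E} {Y : E →L[𝕜] F} {z : 𝕜} (hz : z ≠ 0)
    (h : z ∈ spectrum 𝕜 (X ∘L Y)) : z ∈ spectrum 𝕜 (Y ∘L X) := by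
  contrapose h
  rw [spectrum.notMem_iff, isUnit_iff_exists] at h ⊢
  obtain ⟨R, hright, hleft⟩ := h
  -- If `R` inverts `z - YX`, then `z⁻¹ (1 + X R Y)` inverts `z - XY`.
  refine ⟨z⁻¹ • (1 + X ∘L R ∘L Y), ?_, ?_⟩
  · ext x
    have hx : z • X (R (Y x)) - X (Y (X (R (Y x)))) = X (Y x) := by
      simpa using congrArg X (DFunLike.congr_fun hright (Y x))
    simp only [mul_apply_eq_comp, sub_apply, Algebra.algebraMap_eq_smul_one, smul_apply, add_apply,
      comp_apply, map_smul, map_add, one_apply_eq_self]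
    linear_combination (norm := (match_scalars <;> field_simp <;> ring)) z⁻¹ • hx
  · ext x
    have hx : z • X (R (Y x)) - X (R (Y (X (Y x)))) = X (Y x) := by
      simpa using congrArg X (DFunLike.congr_fun hleft (Y x))
    simp only [mul_apply_eq_comp, sub_apply, Algebra.algebraMap_eq_smul_one, smul_apply, add_apply,
      comp_apply, map_smul, map_sub, one_apply_eq_self]
    linear_combination (norm := (match_scalars <;> field_simp <;> ring)) z⁻¹ • hx

theorem re_le_of_mem_spectrum [NormedAddCommGroup E] [InnerProductSpace 𝕜 E] [CompleteSpace E]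
    {B : E →L[𝕜] E} {b : ℝ} (hB : ∀ x, RCLike.re ⟪B x, x⟫_𝕜 ≤ b * ‖x‖ ^ 2) {z : 𝕜}
    (hz : z ∈ spectrum 𝕜 B) : RCLike.re z ≤ b := by
  contrapose! hz
  rw [spectrum.notMem_iff]
  refine isUnit_of_forall_le_norm_inner_map _ (c := ⟨RCLike.re z - b, by linarith⟩)
    (sub_pos.2 hz) fun x ↦ ?_
  calc ‖x‖ ^ 2 * (RCLike.re z - b) ≤ RCLike.re z * ‖x‖ ^ 2 - RCLike.re ⟪B x, x⟫_𝕜 := by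
        linarith [hB x]
    _ = RCLike.re ⟪(algebraMap 𝕜 (E →L[𝕜] E) z - B) x, x⟫_𝕜 := by
        rw [sub_apply, inner_sub_left, map_sub, Algebra.algebraMap_eq_smul_one, smul_apply,
          one_apply_eq_self, inner_smul_left, inner_self_eq_norm_sq_to_K, ← RCLike.ofReal_pow,
          RCLike.re_mul_ofReal, RCLike.conj_re]
    _ ≤ _ := RCLike.re_le_norm _

end Spectrum

section Hilbert

variable {E F : Type*} [NormedAddCommGroup E] [InnerProductSpace ℂ E] [CompleteSpace E]

theorem re_inner_comp_apply_self_le [NormedAddCommGroup F] [InnerProductSpace ℂ F]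
    [CompleteSpace F] {X : F →L[ℂ] E} {Y : E →L[ℂ] F} (hXY : IsSelfAdjoint (X ∘L Y)) {b : ℝ}
    (hb : 0 ≤ b) (hYX : ∀ v, (⟪Y (X v), v⟫_ℂ).re ≤ b * ‖v‖ ^ 2) (x : E) :
    (⟪X (Y x), x⟫_ℂ).re ≤ b * ‖x‖ ^ 2 := by
  have hspec : ∀ c ∈ spectrum ℝ (X ∘L Y), c ≤ b := by
    intro c hc
    rcases eq_or_ne c 0 with rfl | hc0
    · exact hb
    rw [← spectrum.preimage_algebraMap ℂ] at hc
    exact re_le_of_mem_spectrum (B := Y ∘L X) hYX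
      (mem_spectrum_comp_swap (Complex.ofReal_ne_zero.2 hc0) hc)
  have hpos : 0 ≤ (⟪(algebraMap ℝ (E →L[ℂ] E) b - X ∘L Y) x, x⟫_ℂ).re :=
    ((le_def _ _).1 (le_algebraMap_of_spectrum_le hspec)).re_inner_nonneg_left x
  have hbx : (⟪algebraMap ℝ (E →L[ℂ] E) b x, x⟫_ℂ).re = b * ‖x‖ ^ 2 := by
    rw [Algebra.algebraMap_eq_smul_one, smul_apply, one_apply_eq_self, ← Complex.coe_smul,
      inner_smul_left, Complex.conj_ofReal, Complex.re_ofReal_mul, inner_self_eq_norm_sq_to_K]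
    norm_cast
  rw [sub_apply, inner_sub_left, Complex.sub_re, hbx, comp_apply] at hpos
  linarith

theorem re_inner_operatorMatrix_le (T S : E →L[ℂ] E) (p q : E) :
    (⟪S (T p + adjoint S q), p⟫_ℂ).re + (⟪adjoint T (T p + adjoint S q), q⟫_ℂ).re ≤
      (numericalRadius (S * T) + ‖S * adjoint S + adjoint T * T‖ / 2) * (‖p‖ ^ 2 + ‖q‖ ^ 2) := by
  have hp : (⟪S (T p), p⟫_ℂ).re ≤ numericalRadius (S * T) * ‖p‖ ^ 2 :=
    (Complex.re_le_norm _).trans (norm_inner_apply_self_le_numericalRadius_mul_sq (S * T) p)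
  have hq : (⟪adjoint T (adjoint S q), q⟫_ℂ).re ≤ numericalRadius (S * T) * ‖q‖ ^ 2 := by
    rw [adjoint_inner_left, adjoint_inner_left, ← inner_conj_symm, Complex.conj_re]
    exact (Complex.re_le_norm _).trans (norm_inner_apply_self_le_numericalRadius_mul_sq (S * T) q)
  have hpq : (⟪S (adjoint S q), p⟫_ℂ).re + (⟪adjoint T (T p), q⟫_ℂ).re ≤
      ‖S * adjoint S + adjoint T * T‖ * ‖p‖ * ‖q‖ :=
    calc (⟪S (adjoint S q), p⟫_ℂ).re + (⟪adjoint T (T p), q⟫_ℂ).re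
        = (⟪(S * adjoint S + adjoint T * T) p, q⟫_ℂ).re := by
          rw [add_apply, inner_add_left, Complex.add_re, mul_apply_eq_comp, mul_apply_eq_comp,
            ← adjoint_inner_right S, ← inner_conj_symm, adjoint_inner_right, Complex.conj_re]
      _ ≤ ‖(S * adjoint S + adjoint T * T) p‖ * ‖q‖ :=
          (Complex.re_le_norm _).trans (norm_inner_le_norm _ _)
      _ ≤ _ := by gcongr; exact le_opNorm _ p
  rw [map_add, map_add, inner_add_left, inner_add_left, Complex.add_re, Complex.add_re]
  nlinarith [mul_nonneg (norm_nonneg (S * adjoint S + adjoint T * T)) (sq_nonneg (‖p‖ - ‖q‖))]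

theorem two_mul_re_inner_mul_apply_self_le (T S : E →L[ℂ] E) (x : E) :
    2 * (⟪(T * S) x, x⟫_ℂ).re ≤
      (numericalRadius (S * T) + ‖S * adjoint S + adjoint T * T‖ / 2) * ‖x‖ ^ 2 := by
  let X : WithLp 2 (E × E) →L[ℂ] E := T ∘L WithLp.fstL 2 ℂ E E + adjoint S ∘L WithLp.sndL 2 ℂ E E
  let Y : E →L[ℂ] WithLp 2 (E × E) :=
    (WithLp.prodContinuousLinearEquiv 2 ℂ E E).symm.toContinuousLinearMap ∘L S.prod (adjoint T)
  have hXY : X ∘L Y = T * S + star (T * S) := by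
    ext x
    simp [X, Y, star_mul, star_eq_adjoint]
  have hYX (v : WithLp 2 (E × E)) : (⟪Y (X v), v⟫_ℂ).re ≤
      (numericalRadius (S * T) + ‖S * adjoint S + adjoint T * T‖ / 2) * ‖v‖ ^ 2 := by
    rw [WithLp.prod_norm_sq_eq_of_L2]
    exact re_inner_operatorMatrix_le T S v.fst v.snd
  have hnonneg := numericalRadius_nonneg (S * T)
  calc 2 * (⟪(T * S) x, x⟫_ℂ).re = (⟪X (Y x), x⟫_ℂ).re := by
        rw [← comp_apply, hXY, add_apply, inner_add_left, star_eq_adjoint, adjoint_inner_left,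
          Complex.add_re, ← inner_conj_symm x, Complex.conj_re, two_mul]
    _ ≤ _ := re_inner_comp_apply_self_le (hXY ▸ .add_star_self _) (by positivity) hYX x

theorem numericalRadius_mul_le (T S : E →L[ℂ] E) :
    numericalRadius (T * S) ≤
      1 / 2 * numericalRadius (S * T) + 1 / 4 * ‖S * adjoint S + adjoint T * T‖ := by
  have hnonneg := numericalRadius_nonneg (S * T)
  refine numericalRadius_le (by positivity) fun x ↦ ?_
  obtain ⟨c, hc, hcx⟩ := Complex.exists_norm_eq_mul_self ⟪(T * S) x, x⟫_ℂ
  have hadj : adjoint (star c • T) * (star c • T) = adjoint T * T := by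
    have hcc : c * star c = 1 := by
      simpa [hc] using Complex.mul_conj' c
    rw [← star_eq_adjoint, ← star_eq_adjoint, star_smul, star_star, smul_mul_smul_comm, hcc,
      one_smul]
  have hrot := two_mul_re_inner_mul_apply_self_le (star c • T) S x
  rw [hadj, mul_smul_comm, numericalRadius_smul_of_norm_eq_one (by simpa using hc), smul_mul_assoc,
    smul_apply, inner_smul_left, ← starRingEnd_apply, Complex.conj_conj, ← hcx,
    Complex.ofReal_re] at hrot
  linarith

end Hilbert

theorem numericalRadius_mul_le_of_formalAdjoint {E : Type*} [SeminormedAddCommGroup E]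
    [InnerProductSpace ℂ E] {T T' S S' : E →L[ℂ] E}
    (hT : ∀ x y, ⟪T' x, y⟫_ℂ = ⟪x, T y⟫_ℂ) (hS : ∀ x y, ⟪S' x, y⟫_ℂ = ⟪x, S y⟫_ℂ) :
    numericalRadius (T * S) ≤
      1 / 2 * numericalRadius (S * T) + 1 / 4 * ‖S * S' + T' * T‖ := by
  have hmul (P Q : E →L[ℂ] E) : (P * Q).completion = P.completion * Q.completion :=
    completion_comp P Q
  have hadd : (S * S' + T' * T).completion =
      S.completion * adjoint S.completion + adjoint T.completion * T.completion := by
    rw [completion_add, hmul, hmul, completion_eq_adjoint hT, completion_eq_adjoint hS]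
  rw [← numericalRadius_completion, ← numericalRadius_completion (S * T), ← norm_completion,
    hadd, hmul, hmul]
  exact numericalRadius_mul_le T.completion S.completion

theorem norm_pow_apply_le {𝕜 E : Type*} [NontriviallyNormedField 𝕜] [SeminormedAddCommGroup E]
    [NormedSpace 𝕜 E] (T : E →L[𝕜] E) (n : ℕ) (x : E) : ‖(T ^ n) x‖ ≤ ‖T‖ ^ n * ‖x‖ := by
  induction n with
  | zero => simp
  | succ n ih =>
    rw [pow_succ', pow_succ', mul_apply_eq_comp, mul_assoc]
    exact T.le_opNorm_of_le ih

section LogConvex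

theorem mul_le_mul_succ_of_sq_le_mul {a : ℕ → ℝ} (ha : ∀ n, 0 ≤ a n)
    (hconvex : ∀ n, a (n + 1) ^ 2 ≤ a n * a (n + 2)) (n : ℕ) : a 1 * a n ≤ a 0 * a (n + 1) := by
  induction n with
  | zero => rw [mul_comm]
  | succ n ih =>
    rcases (ha n).eq_or_lt with hn | hn
    · have : a (n + 1) = 0 := by simpa [← hn] using hconvex n
      rw [this, mul_zero]
      exact mul_nonneg (ha _) (ha _)
    · refine le_of_mul_le_mul_left ?_ hn
      calc a n * (a 1 * a (n + 1)) = a 1 * a n * a (n + 1) := by ring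
        _ ≤ a 0 * a (n + 1) * a (n + 1) := by gcongr; exact ha _
        _ = a 0 * a (n + 1) ^ 2 := by ring
        _ ≤ a 0 * (a n * a (n + 2)) := by gcongr; exacts [ha 0, hconvex n]
        _ = a n * (a 0 * a (n + 1 + 1)) := by ring

theorem le_mul_of_sq_le_mul_of_le_mul_pow {a : ℕ → ℝ} {C r : ℝ} (ha : ∀ n, 0 ≤ a n)
    (hconvex : ∀ n, a (n + 1) ^ 2 ≤ a n * a (n + 2)) (hr : 0 ≤ r)
    (hgrowth : ∀ n, a n ≤ C * r ^ n) : a 1 ≤ r * a 0 := by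
  rcases (ha 0).eq_or_lt with h0 | h0
  · have : a 1 = 0 := by simpa [← h0] using hconvex 0
    simp [this, ← h0]
  by_contra! hlt
  rw [← lt_div_iff₀ h0] at hlt
  have hgeom (n : ℕ) : (a 1 / a 0) ^ n * a 0 ≤ C * r ^ n := by
    refine (geom_le (div_nonneg (ha 1) (ha 0)) n fun k _ ↦ ?_).trans (hgrowth n)
    rw [div_mul_eq_mul_div, div_le_iff₀ h0, mul_comm (a (k + 1))]
    exact mul_le_mul_succ_of_sq_le_mul ha hconvex k
  have hlittle := (isLittleO_pow_pow_of_lt_left hr hlt).const_mul_left C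
  obtain ⟨n, hn⟩ := (hlittle.def (half_pos h0)).exists
  have hpos : 0 < (a 1 / a 0) ^ n * a 0 := mul_pos (pow_pos (hr.trans_lt hlt) n) h0
  rw [Real.norm_of_nonneg (pow_pos (hr.trans_lt hlt) n).le] at hn
  linarith [hgeom n, Real.le_norm_self (C * r ^ n)]

end LogConvex

section FormSpace

variable {E : Type*} [NormedAddCommGroup E] [InnerProductSpace ℂ E] {A T X S Y : E →L[ℂ] E}

theorem innA_conj_symm (hA : A.IsPositive) (x y : E) : starRingEnd ℂ (innA A y x) = innA A x y := by
  rw [innA, innA, inner_conj_symm, hA.inner_left_eq_inner_right]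

theorem innA_add_left (A : E →L[ℂ] E) (x y z : E) : innA A (x + y) z = innA A x z + innA A y z := by
  simp only [innA, map_add, inner_add_left]

theorem innA_smul_left (A : E →L[ℂ] E) (x y : E) (c : ℂ) :
    innA A (c • x) y = starRingEnd ℂ c * innA A x y := by
  simp only [innA, map_smul, inner_smul_left]

/-- The space `E` carrying the semi-inner product `⟪x, y⟫_A` of a positive operator `A` in place of
its own inner product. -/
def FormSpace (_hA : A.IsPositive) : Type _ := E

namespace FormSpace

variable (hA : A.IsPositive)

instance : AddCommGroup (FormSpace hA) := inferInstanceAs (AddCommGroup E)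

instance : Module ℂ (FormSpace hA) := inferInstanceAs (Module ℂ E)

/-- The identity map from `E` to its copy with the semi-inner product of `A`. -/
def of : E ≃ₗ[ℂ] FormSpace hA := LinearEquiv.refl ℂ E

/-- The semi-inner product of `A`, as the structure from which the seminorm is built. -/
abbrev core : PreInnerProductSpace.Core ℂ (FormSpace hA) where
  inner u v := innA A ((of hA).symm u) ((of hA).symm v)
  conj_inner_symm u v := innA_conj_symm hA _ _
  re_inner_nonneg u := hA.re_inner_nonneg_left _
  add_left u v w := by rw [map_add, innA_add_left]
  smul_left u v c := by rw [map_smul, innA_smul_left]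

instance : SeminormedAddCommGroup (FormSpace hA) :=
  InnerProductSpace.Core.toSeminormedAddCommGroup (c := core hA)

instance : InnerProductSpace ℂ (FormSpace hA) := InnerProductSpace.ofCore (core hA)

theorem inner_of (x y : E) : ⟪of hA x, of hA y⟫_ℂ = innA A x y := rfl

theorem norm_of (x : E) : ‖of hA x‖ = vnormA A x := rfl

end FormSpace

theorem vnormA_nonneg (A : E →L[ℂ] E) (x : E) : 0 ≤ vnormA A x := Real.sqrt_nonneg _

theorem vnormA_sq (hA : A.IsPositive) (x : E) : vnormA A x ^ 2 = (innA A x x).re :=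
  Real.sq_sqrt (hA.re_inner_nonneg_left x)

theorem re_innA_le (hA : A.IsPositive) (x y : E) : (innA A x y).re ≤ vnormA A x * vnormA A y := by
  rw [← FormSpace.inner_of hA, ← FormSpace.norm_of hA, ← FormSpace.norm_of hA]
  exact re_inner_le_norm (𝕜 := ℂ) _ _

theorem vnormA_le (A : E →L[ℂ] E) (x : E) : vnormA A x ≤ √‖A‖ * ‖x‖ := by
  rw [vnormA, ← Real.sqrt_sq (norm_nonneg x), ← Real.sqrt_mul (norm_nonneg A)]
  exact Real.sqrt_le_sqrt
    ((Complex.re_le_norm _).trans (norm_inner_apply_self_le_norm_mul_sq A x))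

/-- `X` is an adjoint of `T` for the semi-inner product of `A`; unlike `IsReducedAAdjoint`, this
puts no restriction on the range of `X`. -/
def IsAAdjointPair (A T X : E →L[ℂ] E) : Prop :=
  ∀ x y, innA A (T x) y = innA A x (X y)

namespace IsAAdjointPair

theorem symm (hA : A.IsPositive) (h : IsAAdjointPair A T X) : IsAAdjointPair A X T := fun x y ↦ by
  rw [← innA_conj_symm hA, ← h, innA_conj_symm hA]

theorem mul (hT : IsAAdjointPair A T X) (hS : IsAAdjointPair A S Y) :
    IsAAdjointPair A (T * S) (Y * X) := fun x y ↦ by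
  rw [mul_apply_eq_comp, hT, hS, mul_apply_eq_comp]

theorem add (hT : IsAAdjointPair A T X) (hS : IsAAdjointPair A S Y) :
    IsAAdjointPair A (T + S) (X + Y) := fun x y ↦ by
  have h := congrArg₂ (· + ·) (hT x y) (hS x y)
  simpa only [innA, add_apply, map_add, inner_add_left, inner_add_right] using h

theorem vnormA_apply_le_of_self (hA : A.IsPositive) (h : IsAAdjointPair A T T) (x : E) :
    vnormA A (T x) ≤ ‖T‖ * vnormA A x := by
  have hconvex (n : ℕ) : vnormA A ((T ^ (n + 1)) x) ^ 2 ≤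
      vnormA A ((T ^ n) x) * vnormA A ((T ^ (n + 2)) x) := by
    rw [vnormA_sq hA, pow_succ' T (n + 1), pow_succ' T n, mul_apply_eq_comp, mul_apply_eq_comp,
      h]
    exact re_innA_le hA _ _
  refine le_mul_of_sq_le_mul_of_le_mul_pow (a := fun n ↦ vnormA A ((T ^ n) x))
    (C := √‖A‖ * ‖x‖) (fun _ ↦ vnormA_nonneg _ _) hconvex (norm_nonneg T) fun n ↦ ?_
  calc vnormA A ((T ^ n) x) ≤ √‖A‖ * ‖(T ^ n) x‖ := vnormA_le A _
    _ ≤ √‖A‖ * (‖T‖ ^ n * ‖x‖) := by gcongr; exact norm_pow_apply_le T n x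
    _ = √‖A‖ * ‖x‖ * ‖T‖ ^ n := by ring

theorem vnormA_apply_le (hA : A.IsPositive) (h : IsAAdjointPair A T X) (x : E) :
    vnormA A (T x) ≤ √‖X * T‖ * vnormA A x := by
  refine le_of_sq_le_sq ?_ (mul_nonneg (Real.sqrt_nonneg _) (vnormA_nonneg A x))
  calc vnormA A (T x) ^ 2 = (innA A x ((X * T) x)).re := by
        rw [vnormA_sq hA, h, mul_apply_eq_comp]
    _ ≤ vnormA A x * vnormA A ((X * T) x) := re_innA_le hA _ _
    _ ≤ vnormA A x * (‖X * T‖ * vnormA A x) := by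
        gcongr
        · exact vnormA_nonneg A x
        · exact ((h.symm hA).mul h).vnormA_apply_le_of_self hA x
    _ = (√‖X * T‖ * vnormA A x) ^ 2 := by rw [mul_pow, Real.sq_sqrt (norm_nonneg _)]; ring

/-- An operator with an `A`-adjoint, as a bounded operator for the seminorm of `A`. -/
def lift (hA : A.IsPositive) (h : IsAAdjointPair A T X) : FormSpace hA →L[ℂ] FormSpace hA :=
  ((FormSpace.of hA).conj T.toLinearMap).mkContinuous √‖X * T‖ fun u ↦
    h.vnormA_apply_le hA ((FormSpace.of hA).symm u)

theorem numericalRadius_lift (hA : A.IsPositive) (h : IsAAdjointPair A T X) :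
    numericalRadius (h.lift hA) = wA A T := rfl

theorem norm_lift_le (hA : A.IsPositive) (h : IsAAdjointPair A T X) :
    ‖h.lift hA‖ ≤ opNormA A T := by
  have hbdd : BddAbove {c : ℝ | ∃ x : E, vnormA A x = 1 ∧ c = vnormA A (T x)} := by
    refine ⟨√‖X * T‖, ?_⟩
    rintro _ ⟨x, hx, rfl⟩
    simpa only [hx, mul_one] using h.vnormA_apply_le hA x
  refine opNorm_le_of_unit_norm (Real.sSup_nonneg ?_) fun u hu ↦ ?_
  · rintro _ ⟨x, -, rfl⟩
    exact vnormA_nonneg A _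
  · exact le_csSup hbdd ⟨(FormSpace.of hA).symm u, hu, rfl⟩

theorem inner_lift_left (hA : A.IsPositive) (h : IsAAdjointPair A T X) (u v : FormSpace hA) :
    ⟪h.lift hA u, v⟫_ℂ = ⟪u, (h.symm hA).lift hA v⟫_ℂ :=
  h ((FormSpace.of hA).symm u) ((FormSpace.of hA).symm v)

end IsAAdjointPair

theorem stmt2_general (hA : A.IsPositive) (hT : IsAAdjointPair A T X) (hS : IsAAdjointPair A S Y) :
    wA A (T * S) ≤ (1 / 2) * wA A (S * T) + (1 / 4) * opNormA A (S * Y + X * T) := by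
  have hX := hT.symm hA
  have hY := hS.symm hA
  have hsum := (hS.mul hY).add (hX.mul hT)
  calc wA A (T * S) = numericalRadius (hT.lift hA * hS.lift hA) :=
        ((hT.mul hS).numericalRadius_lift hA).symm
    _ ≤ 1 / 2 * numericalRadius (hS.lift hA * hT.lift hA) +
        1 / 4 * ‖hS.lift hA * hY.lift hA + hX.lift hA * hT.lift hA‖ :=
      numericalRadius_mul_le_of_formalAdjoint (hX.inner_lift_left hA) (hY.inner_lift_left hA)
    _ = 1 / 2 * wA A (S * T) + 1 / 4 * ‖hsum.lift hA‖ := by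
        rw [← (hS.mul hT).numericalRadius_lift hA]; rfl
    _ ≤ _ := by gcongr; exact hsum.norm_lift_le hA

end FormSpace

theorem IsReducedAAdjoint.isAAdjointPair {A T X : H →L[ℂ] H} (hA : A.IsPositive)
    (h : IsReducedAAdjoint A T X) : IsAAdjointPair A T X := fun x y ↦ by
  rw [innA, innA, hA.inner_left_eq_inner_right, hA.inner_left_eq_inner_right,
    ← adjoint_inner_right, ← comp_apply, ← h.1, comp_apply]

theorem stmt2 (A : H →L[ℂ] H) (hA : A.IsPositive) (hA0 : A ≠ 0)
    (T S Tsharp Ssharp : H →L[ℂ] H)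
    (hT : IsReducedAAdjoint A T Tsharp) (hS : IsReducedAAdjoint A S Ssharp) :
    wA A (T * S) ≤ (1 / 2) * wA A (S * T) +
      (1 / 4) * opNormA A (S * Ssharp + Tsharp * T) :=
  stmt2_general hA (hT.isAAdjointPair hA) (hS.isAAdjointPair hA)
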